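/- Let Â = A + εB be an n×n dual matrix. Then Â has dual index one if and only if there exists a real n×n matrix G that is a group inverse of A (so A has index one) and (Iₙ − A·G)·B·(Iₙ − A·G) = 0. -/

import Mathlib

open Matrix

/-- The dual matrix `A + εB`, viewed as a matrix over the dual numbers `ℝ[ε]`. -/
def dm {n : ℕ} (A B : Matrix (Fin n) (Fin n) ℝ) :
    Matrix (Fin n) (Fin n) (DualNumber ℝ) :=
  fun i j => TrivSqZeroExt.inl (A i j) + TrivSqZeroExt.inr (B i j)

/-- A dual matrix has dual index one iff its column space equals that of its square,
equivalently (as shown in the paper) there is a dual matrix `X` with `M² * X = M`. -/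
def DualIndexOne {n : ℕ} (M : Matrix (Fin n) (Fin n) (DualNumber ℝ)) : Prop :=
  ∃ X : Matrix (Fin n) (Fin n) (DualNumber ℝ), M * M * X = M

/-- `G` is a group inverse of the real matrix `A`. -/
def IsGroupInv {n : ℕ} (A G : Matrix (Fin n) (Fin n) ℝ) : Prop :=
  A * G * A = A ∧ G * A * G = G ∧ A * G = G * A

/-- `X` is the Moore–Penrose inverse of the real matrix `A`. -/
def IsMoorePenrose {n : ℕ} (A X : Matrix (Fin n) (Fin n) ℝ) : Prop :=
  A * X * A = A ∧ X * A * X = X ∧ (A * X)ᵀ = A * X ∧ (X * A)ᵀ = X * A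

/-- `C` is a core inverse of the real matrix `A`. -/
def IsCoreInv {n : ℕ} (A C : Matrix (Fin n) (Fin n) ℝ) : Prop :=
  A * C * A = A ∧ A * (C * C) = C ∧ (A * C)ᵀ = A * C

/-- `G` is a dual group generalized inverse (DGGI) of the dual matrix `M`. -/
def IsDGGI {n : ℕ} (M G : Matrix (Fin n) (Fin n) (DualNumber ℝ)) : Prop :=
  M * G * M = M ∧ G * M * G = G ∧ M * G = G * M

/-- `X` is a dual Moore–Penrose generalized inverse (DMPGI) of the dual matrix `M`. -/
def IsDMPGI {n : ℕ} (M X : Matrix (Fin n) (Fin n) (DualNumber ℝ)) : Prop :=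
  M * X * M = M ∧ X * M * X = X ∧ (M * X)ᵀ = M * X ∧ (X * M)ᵀ = X * M

/-- `G` is a dual core generalized inverse (DCGI) of the dual matrix `M`. -/
def IsDCGI {n : ℕ} (M G : Matrix (Fin n) (Fin n) (DualNumber ℝ)) : Prop :=
  M * G * M = M ∧ M * (G * G) = G ∧ (M * G)ᵀ = M * G

lemma aux_left {n : ℕ} (A X : Matrix (Fin n) (Fin n) ℝ) (h : A * A * X = A) :
    ∃ Y, Y * (A * A) = A := by
  obtain ⟨k, hk⟩ := IsArtinian.monotone_stabilizes (R := ℝ) (M := Matrix (Fin n) (Fin n) ℝ)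
    ⟨fun k => OrderDual.toDual (LinearMap.range (LinearMap.mulRight ℝ (A ^ k))), by
      intro a b hab
      rw [OrderDual.toDual_le_toDual]
      rintro _ ⟨Z, rfl⟩
      refine ⟨Z * A ^ (b - a), ?_⟩
      simp only [LinearMap.mulRight_apply, mul_assoc, ← pow_add]
      congr 2
      omega⟩
  have h1 := hk (k + 1) (by omega)
  have h2 : A ^ k ∈ LinearMap.range (LinearMap.mulRight ℝ (A ^ (k + 1))) := by
    have h3 : LinearMap.range (LinearMap.mulRight ℝ (A ^ k)) =
      LinearMap.range (LinearMap.mulRight ℝ (A ^ (k + 1))) := h1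
    rw [← h3]
    exact ⟨1, by simp⟩
  obtain ⟨Z, hZ⟩ := h2
  have hZ : Z * A ^ (k + 1) = A ^ k := hZ
  have hp : ∀ m : ℕ, A ^ (m + 1) * X ^ m = A := by
    intro m
    induction m with
    | zero => simp
    | succ m ih =>
      calc A ^ (m + 1 + 1) * X ^ (m + 1) = A ^ m * (A * A * X) * X ^ m := by
            rw [pow_succ A (m + 1), pow_succ A m, pow_succ' X]; simp only [mul_assoc]
        _ = A := by rw [h, ← pow_succ, ih]
  refine ⟨Z, ?_⟩
  calc Z * (A * A) = Z * (A * (A ^ (k + 1) * X ^ k)) := by rw [hp]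
    _ = (Z * A ^ (k + 1)) * (A * X ^ k) := by
        have : A * A ^ (k + 1) = A ^ (k + 1) * A := by rw [← pow_succ', pow_succ]
        rw [← mul_assoc A, this]; simp only [mul_assoc]
    _ = A := by rw [hZ, ← mul_assoc, ← pow_succ, hp]

lemma aux_dm {n : ℕ} (X : Matrix (Fin n) (Fin n) (DualNumber ℝ)) :
    ∃ P Q, X = dm P Q :=
  ⟨fun i j => (X i j).fst, fun i j => (X i j).snd, by
    ext i j
    exacts [by simp [dm], by simp [dm]]⟩

lemma aux_mul {n : ℕ} (A B C D : Matrix (Fin n) (Fin n) ℝ) :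
    dm A B * dm C D = dm (A * C) (A * D + B * C) := by
  ext i j
  · simp [dm, Matrix.mul_apply, TrivSqZeroExt.fst_sum]
  · simp [dm, Matrix.mul_apply, TrivSqZeroExt.snd_sum, Finset.sum_add_distrib, mul_comm]

lemma aux_inj {n : ℕ} (A B C D : Matrix (Fin n) (Fin n) ℝ) :
    dm A B = dm C D ↔ A = C ∧ B = D := by
  constructor
  · intro h
    constructor
    · ext i j
      simpa [dm] using congrArg TrivSqZeroExt.fst (congrFun (congrFun h i) j)
    · ext i j
      simpa [dm] using congrArg TrivSqZeroExt.snd (congrFun (congrFun h i) j)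
  · rintro ⟨rfl, rfl⟩; rfl

theorem stmt3 {n : ℕ} (A B : Matrix (Fin n) (Fin n) ℝ) :
    DualIndexOne (dm A B) ↔
      ∃ G : Matrix (Fin n) (Fin n) ℝ, IsGroupInv A G ∧
        (1 - A * G) * B * (1 - A * G) = 0 := by
  constructor
  · rintro ⟨X', h⟩
    obtain ⟨X, W, rfl⟩ := aux_dm X'
    rw [aux_mul, aux_mul, aux_inj] at h
    obtain ⟨h1, h2⟩ := h
    obtain ⟨Y, hY⟩ := aux_left A X h1
    have c : A * X = Y * A := by
      calc A * X = Y * (A * A) * X := by rw [hY]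
        _ = Y * (A * A * X) := by simp only [mul_assoc]
        _ = Y * A := by rw [h1]
    have e1 : A * (Y * A) = A := by rw [← c, ← mul_assoc, h1]
    have e2 : A * X * A = A := by rw [c, mul_assoc, hY]
    have g1 : A * (Y * A * X) = A * X := by rw [← mul_assoc, e1]
    have g2 : Y * A * X * A = A * X := by rw [mul_assoc, mul_assoc, ← mul_assoc A X, e2, c]
    refine ⟨Y * A * X, ⟨?_, ?_, ?_⟩, ?_⟩
    · rw [g1, e2]
    · rw [g2]
      calc A * X * (Y * A * X) = Y * (A * (Y * A)) * X := by rw [c]; simp only [mul_assoc]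
        _ = Y * A * X := by rw [e1]
    · rw [g1, g2]
    · rw [g1]
      have z1 : (1 - A * X) * A = 0 := by rw [sub_mul, one_mul, e2, sub_self]
      have z2 : A * X * (1 - A * X) = 0 := by
        rw [mul_sub, mul_one, ← mul_assoc, e2, sub_self]
      have h3 : (1 - A * X) * B = (1 - A * X) * B * (A * X) := by
        calc (1 - A * X) * B = (1 - A * X) * (A * A * W + (A * B + B * A) * X) := by rw [h2]
          _ = (1 - A * X) * A * (A * W + B * X) + (1 - A * X) * B * (A * X) := by noncomm_ring
          _ = _ := by rw [z1, zero_mul, zero_add]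
      rw [h3, mul_assoc, z2, mul_zero]
  · rintro ⟨G, ⟨h1, h2, h3⟩, h4⟩
    refine ⟨dm G (G * G * (A * G * B * (1 - A * G) - A * B * G)), ?_⟩
    have k : A * A * G = A := by rw [mul_assoc, h3, ← mul_assoc, h1]
    have k2 : A * A * (G * G) * A = A := by
      rw [← mul_assoc, k, h1]
    rw [aux_mul, aux_mul, aux_inj]
    refine ⟨k, ?_⟩
    have h5 : B * (1 - A * G) = A * G * B * (1 - A * G) := by
      rw [← sub_eq_zero, ← h4]; noncomm_ring
    calc A * A * (G * G * (A * G * B * (1 - A * G) - A * B * G)) + (A * B + B * A) * G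
        = A * A * (G * G) * A * (G * B * (1 - A * G) - B * G) + (A * B + B * A) * G := by
          noncomm_ring
      _ = A * G * B * (1 - A * G) + B * (A * G) := by rw [k2]; noncomm_ring
      _ = B := by rw [← h5]; noncomm_ring
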